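/- For every 0 < ε < 1 there exists C > 0 such that, for p ≥ C log n / n, the binomial random graph G = G_{n,p} asymptotically almost surely satisfies: for every H ∈ H^{ε,ε}_{n,p}(G) and G' := G ∖ H, and for every set X ⊆ V, we have |N_{G'}(X)| ≥ min{ ε|X|np/2, εn(log n)^{-1/4}/2 }. -/

import Mathlib

/-!
Only the case `i = 1` of the Chvátal condition is needed: its second alternative would force a
negative degree, so every vertex of `H` has degree at most `(1 - ε) n p`
(`ChvatalFamily.deg_le`). Write `L = (log n) ^ (-1/4)`. With high probability `G` has the following
three properties, each obtained from the Chernoff bound `Pr_tail` and a union bound.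

* Every degree exceeds `(1 - ε / 8) n p` (`Pr_deg_le`), so degrees in `G \ H` are at least
  `(7 ε / 8) n p`.
* Every nonempty set `Z` with `|Z| ≤ n L` spans fewer than `(ε / 16) |Z| n p` edges
  (`Pr_inner_le`).
* For every nonempty `X` and every `Y` with `|Y| < (ε n / 2) min (|X| p) L`, there are fewer than
  `(3 ε / 4) |X| n p` edges from `X` to `Y \ X` (`Pr_outer_le`). With `μ = min (|X| p) L`, the
  Chernoff parameter `log (1 / μ)` makes the number of choices of `Y`, at most about
  `μ ^ (-(ε / 2) |X| n p)`, negligible against the tail `μ ^ ((3 ε / 4) |X| n p)`.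

If `Y = N_{G \ H}(X)` were smaller than the claimed minimum, then the edges of `G \ H` meeting `X`
would run from `X` to `Y \ X` or inside `X ∩ Y`, and counting them would contradict the lower bound
on the degree sum over `X` (`expansion_of_typical`).
-/

open Filter Real

namespace Resilience

variable {V : Type*}

/-- The degree of a vertex, as the cardinality of its neighbourhood. -/
noncomputable def deg (G : SimpleGraph V) (v : V) : ℕ := (G.neighborSet v).ncard

/-- The neighbourhood of a set of vertices: all vertices with a neighbour in `X`. -/
def nbhd (G : SimpleGraph V) (X : Set V) : Set V := {v | ∃ x ∈ X, G.Adj v x}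

/-- The minimum degree over a set of vertices. -/
noncomputable def minDeg (G : SimpleGraph V) (X : Set V) : ℕ :=
  sInf ((fun v => deg G v) '' X)

/-- The number of edges of `G` with one endpoint in `X` and the other in `Y`. -/
noncomputable def eBetween (G : SimpleGraph V) (X Y : Set V) : ℕ :=
  {e ∈ G.edgeSet | ∃ x ∈ X, ∃ y ∈ Y, e = s(x, y)}.ncard

/-- The number of edges of `G` with both endpoints in `A`. -/
noncomputable def eIn (G : SimpleGraph V) (A : Set V) : ℕ :=
  {e ∈ G.edgeSet | ∀ v ∈ e, v ∈ A}.ncard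

/-- The graph on `V` whose edges are the consecutive pairs of the list `l`;
this lets us view a path, recorded as a list of distinct vertices, as a graph. -/
def listGraph (l : List V) : SimpleGraph V :=
  SimpleGraph.fromEdgeSet {e | ∃ q ∈ l.zip l.tail, e = s(q.1, q.2)}

/-- `l` is a (nonempty) path on `V` all of whose edges lie in `G`. -/
def IsPathOn (G : SimpleGraph V) (l : List V) : Prop :=
  l ≠ [] ∧ l.Nodup ∧ l.Chain' G.Adj

/-- `l` is a longest path with all edges in `G`. -/
def IsLongestPathOn (G : SimpleGraph V) (l : List V) : Prop :=
  IsPathOn G l ∧ ∀ l' : List V, IsPathOn G l' → l'.length ≤ l.length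

/-- `l'` is obtained from the path `l` (with fixed last endpoint) by a single rotation
within `G`, whose broken edge lies on the original path `P`.  Writing
`l = a :: t₁ ++ c :: b :: t₂`, the pivot is `b`, the new edge is `ab ∈ G`, the broken
edge is `cb` (an edge of `P`), and the rotated path is `(a :: t₁ ++ [c]).reverse ++ b :: t₂`. -/
def IsRotation (G : SimpleGraph V) (P l l' : List V) : Prop :=
  ∃ (a c b : V) (t₁ t₂ : List V),
    l = a :: t₁ ++ c :: b :: t₂ ∧ G.Adj a b ∧ (listGraph P).Adj c b ∧
    l' = (a :: t₁ ++ [c]).reverse ++ b :: t₂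

/-- The set of paths obtainable from `P` by at most `t` successive rotations within `G`
with fixed last endpoint, all broken edges lying on `P`. -/
def rotSet (G : SimpleGraph V) (P : List V) : ℕ → Set (List V)
  | 0 => {P}
  | t + 1 => rotSet G P t ∪ {l' | ∃ l ∈ rotSet G P t, IsRotation G P l l'}

/-- `R^t_{G,P,u}`: the set of endpoints of paths obtainable from `P` by at most `t`
successive rotations within `G` with fixed last endpoint. -/
def Rset (G : SimpleGraph V) (P : List V) (t : ℕ) : Set V :=
  {x | ∃ l ∈ rotSet G P t, l.head? = some x}

/-- The family `H^ε_{n,p}` of Pósa-type subgraphs: there is an ordering of the vertices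
with non-increasing degrees such that `d_H(v_i) ≤ (n-i)p - εnp` for all `i < n/2`
(1-based indexing). -/
def PosaFamily (n : ℕ) (p ε : ℝ) (H : SimpleGraph (Fin n)) : Prop :=
  ∃ v : Fin n → Fin n, Function.Bijective v ∧
    (∀ i j : Fin n, i ≤ j → deg H (v j) ≤ deg H (v i)) ∧
    ∀ i : Fin n, ((i.1 : ℝ) + 1) < n / 2 →
      (deg H (v i) : ℝ) ≤ ((n : ℝ) - ((i.1 : ℝ) + 1)) * p - ε * n * p

/-- The family `H^{ε,δ}_{n,p}` of (shifted) Chvátal-type subgraphs, where the shift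
`δn` is recorded as a natural number `s`: there is an ordering of the vertices with
non-increasing degrees such that for all `i < n/2` (1-based indexing), either
`d_H(v_i) ≤ (n-i)p - εnp` or `d_H(v_{n-i-s}) ≤ ip - εnp`. -/
def ChvatalFamily (n : ℕ) (p ε : ℝ) (s : ℕ) (H : SimpleGraph (Fin n)) : Prop :=
  ∃ v : Fin n → Fin n, Function.Bijective v ∧
    (∀ i j : Fin n, i ≤ j → deg H (v j) ≤ deg H (v i)) ∧
    ∀ i : Fin n, ((i.1 : ℝ) + 1) < n / 2 →
      ((deg H (v i) : ℝ) ≤ ((n : ℝ) - ((i.1 : ℝ) + 1)) * p - ε * n * p ∨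
       (deg H (v ⟨n - (i.1 + 1) - s - 1, by have := i.2; omega⟩) : ℝ) ≤
         ((i.1 : ℝ) + 1) * p - ε * n * p)

/-- The probability weight of a fixed graph `G` in the binomial random graph `G_{n,p}`. -/
noncomputable def weight (n : ℕ) (p : ℝ) (G : SimpleGraph (Fin n)) : ℝ :=
  p ^ G.edgeSet.ncard * (1 - p) ^ (n.choose 2 - G.edgeSet.ncard)

open Classical in
/-- The probability that the binomial random graph `G_{n,p}` satisfies the property `Q`. -/
noncomputable def Pr (n : ℕ) (p : ℝ) (Q : SimpleGraph (Fin n) → Prop) : ℝ :=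
  ∑ G : SimpleGraph (Fin n), if Q G then weight n p G else 0

/-- Property `RE(δ)` for a (connected) graph `G` on `n` vertices: for every path `P`
on the vertex set, either `G ∪ P` has a longer path, or there are at least `δn` vertices
`v`, each with a set `T v` of at least `δn` vertices `w`, such that `G ∪ P` has a path
from `v` to `w` with the same vertex set as `P`. -/
def RE (n : ℕ) (δ : ℝ) (G : SimpleGraph (Fin n)) : Prop :=
  G.Connected ∧
  ∀ P : List (Fin n), P ≠ [] → P.Nodup →
    (∃ Q : List (Fin n), IsPathOn (G ⊔ listGraph P) Q ∧ P.length < Q.length) ∨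
    (∃ S : Set (Fin n), δ * n ≤ S.ncard ∧
      ∃ T : Fin n → Set (Fin n), (∀ v ∈ S, δ * n ≤ (T v).ncard) ∧
        ∀ v ∈ S, ∀ w ∈ T v, ∃ Q : List (Fin n),
          IsPathOn (G ⊔ listGraph P) Q ∧ Q.head? = some v ∧ Q.getLast? = some w ∧
          Q.toFinset = P.toFinset)

/-- `G₂` complements `G₁` (with respect to parameter `δ` as in `RE(δ)`): for every path
`P` on the vertex set, either `G₁ ∪ P` has a longer path, or there are sets `S`, `T v`
as in the definition of `RE(δ)` together with `v ∈ S` and `w ∈ T v` such that `vw` is an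
edge of `G₁ ∪ G₂`. -/
def Complements (n : ℕ) (δ : ℝ) (G₁ G₂ : SimpleGraph (Fin n)) : Prop :=
  ∀ P : List (Fin n), P ≠ [] → P.Nodup →
    (∃ Q : List (Fin n), IsPathOn (G₁ ⊔ listGraph P) Q ∧ P.length < Q.length) ∨
    (∃ S : Set (Fin n), δ * n ≤ S.ncard ∧
      ∃ T : Fin n → Set (Fin n), (∀ v ∈ S, δ * n ≤ (T v).ncard) ∧
        (∀ v ∈ S, ∀ w ∈ T v, ∃ Q : List (Fin n),
          IsPathOn (G₁ ⊔ listGraph P) Q ∧ Q.head? = some v ∧ Q.getLast? = some w ∧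
          Q.toFinset = P.toFinset) ∧
        ∃ v ∈ S, ∃ w ∈ T v, (G₁ ⊔ G₂).Adj v w)


/-! ### Tail bounds for edge counts -/

open Classical in
/-- The number of pairs in `D` which are edges of `G`. -/
noncomputable def cnt {n : ℕ} (D : Finset (Fin n × Fin n)) (G : SimpleGraph (Fin n)) : ℕ :=
  (D.filter fun q => G.Adj q.1 q.2).card

/-- `D` lists potential edges, each at most once. -/
def EdgeList {n : ℕ} (D : Finset (Fin n × Fin n)) : Prop :=
  (∀ q ∈ D, q.1 ≠ q.2) ∧ Set.InjOn (fun q : Fin n × Fin n => s(q.1, q.2)) (D : Set (Fin n × Fin n))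

open Classical in
/-- Sums over all graphs are sums over all sets of potential edges. -/
lemma sum_graph_eq {n : ℕ} (f : Finset (Sym2 (Fin n)) → ℝ) :
    ∑ G : SimpleGraph (Fin n), f G.edgeFinset =
      ∑ S ∈ (⊤ : SimpleGraph (Fin n)).edgeFinset.powerset, f S := by
  refine Finset.sum_bij (fun G _ => G.edgeFinset) ?_ ?_ ?_ ?_
  · intro G _
    simp only [Finset.mem_powerset]
    exact SimpleGraph.edgeFinset_mono le_top
  · intro G _ G' _ h
    exact SimpleGraph.edgeFinset_inj.1 h
  · intro S hS
    refine ⟨SimpleGraph.fromEdgeSet (S : Set (Sym2 (Fin n))), Finset.mem_univ _, ?_⟩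
    rw [Finset.mem_powerset] at hS
    ext e
    simp only [SimpleGraph.mem_edgeFinset, SimpleGraph.edgeSet_fromEdgeSet, Set.mem_sdiff,
      Finset.mem_coe]
    constructor
    · exact fun h => h.1
    · intro h
      refine ⟨h, ?_⟩
      have := hS h
      rw [SimpleGraph.mem_edgeFinset] at this
      exact SimpleGraph.not_isDiag_of_mem_edgeSet _ this
  · intro G _
    rfl

open Classical in
/-- The probability generating function of a binomial edge count. -/
lemma sum_weight_pow {n : ℕ} (p a : ℝ) (D : Finset (Fin n × Fin n)) (hD : EdgeList D) :
    ∑ G : SimpleGraph (Fin n), weight n p G * a ^ cnt D G = (p * a + (1 - p)) ^ D.card := by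
  set F : Finset (Sym2 (Fin n)) := D.image (fun q => s(q.1, q.2)) with hF
  set U := (⊤ : SimpleGraph (Fin n)).edgeFinset with hU
  have hFU : F ⊆ U := by
    intro e he
    rw [hF, Finset.mem_image] at he
    obtain ⟨q, hq, rfl⟩ := he
    rw [hU, SimpleGraph.mem_edgeFinset, SimpleGraph.mem_edgeSet]
    exact hD.1 q hq
  have hFc : F.card = D.card := Finset.card_image_of_injOn hD.2
  have hUc : U.card = n.choose 2 := by
    rw [hU, SimpleGraph.card_edgeFinset_top_eq_card_choose_two, Fintype.card_fin]
  have h1 : ∀ G : SimpleGraph (Fin n), weight n p G * a ^ cnt D G =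
      p ^ G.edgeFinset.card * (1 - p) ^ (U.card - G.edgeFinset.card) *
        a ^ (G.edgeFinset ∩ F).card := by
    intro G
    have e1 : G.edgeSet.ncard = G.edgeFinset.card := by
      rw [← SimpleGraph.coe_edgeFinset, Set.ncard_coe_finset]
    have e2 : cnt D G = (G.edgeFinset ∩ F).card := by
      have : G.edgeFinset ∩ F =
          (D.filter fun q => G.Adj q.1 q.2).image (fun q => s(q.1, q.2)) := by
        ext e
        simp only [hF, Finset.mem_inter, Finset.mem_image, Finset.mem_filter,
          SimpleGraph.mem_edgeFinset]
        constructor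
        · rintro ⟨h, q, hq, rfl⟩
          exact ⟨q, ⟨hq, h⟩, rfl⟩
        · rintro ⟨q, ⟨hq, h⟩, rfl⟩
          exact ⟨h, q, hq, rfl⟩
      rw [this, Finset.card_image_of_injOn]
      · rfl
      · exact hD.2.mono (Finset.coe_subset.2 (Finset.filter_subset _ _))
    rw [weight, e1, e2, hUc]
  rw [Finset.sum_congr rfl (fun G _ => h1 G),
    sum_graph_eq (fun S => p ^ S.card * (1 - p) ^ (U.card - S.card) * a ^ (S ∩ F).card)]
  have h2 := Finset.prod_add (fun e => p * (if e ∈ F then a else 1)) (fun _ => (1 - p)) U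
  have h3 : ∏ e ∈ U, (p * (if e ∈ F then a else 1) + (1 - p)) =
      (p * a + (1 - p)) ^ D.card := by
    have : ∀ e ∈ U, (p * (if e ∈ F then a else 1) + (1 - p)) =
        if e ∈ F then p * a + (1 - p) else 1 := by
      intro e _
      split_ifs <;> ring
    rw [Finset.prod_congr rfl this, Finset.prod_ite, Finset.prod_const, Finset.prod_const_one,
      mul_one, Finset.filter_mem_eq_inter, Finset.inter_eq_right.2 hFU, hFc]
  rw [← h3, h2]
  refine Finset.sum_congr rfl fun S hS => ?_
  rw [Finset.mem_powerset] at hS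
  rw [Finset.prod_const, Finset.card_sdiff_of_subset hS, Finset.prod_mul_distrib,
    Finset.prod_const, Finset.prod_ite, Finset.prod_const, Finset.prod_const_one,
    mul_one, Finset.filter_mem_eq_inter]
  ring

lemma weight_nonneg {n : ℕ} {p : ℝ} (h0 : 0 ≤ p) (h1 : p ≤ 1) (G : SimpleGraph (Fin n)) :
    0 ≤ weight n p G :=
  mul_nonneg (pow_nonneg h0 _) (pow_nonneg (by linarith) _)

lemma sum_weight (n : ℕ) (p : ℝ) : ∑ G : SimpleGraph (Fin n), weight n p G = 1 := by
  have := sum_weight_pow p 1 (∅ : Finset (Fin n × Fin n)) ⟨by simp, by simp⟩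
  simpa using this

lemma Pr_mono {n : ℕ} {p : ℝ} (h0 : 0 ≤ p) (h1 : p ≤ 1) {Q R : SimpleGraph (Fin n) → Prop}
    (h : ∀ G, Q G → R G) : Pr n p Q ≤ Pr n p R := by
  classical
  refine Finset.sum_le_sum fun G _ => ?_
  have := weight_nonneg h0 h1 G
  have := h G
  split_ifs <;> first | linarith | tauto

lemma Pr_not {n : ℕ} (p : ℝ) (Q : SimpleGraph (Fin n) → Prop) :
    Pr n p Q = 1 - Pr n p (fun G => ¬ Q G) := by
  classical
  rw [eq_sub_iff_add_eq, ← sum_weight n p, Pr, Pr, ← Finset.sum_add_distrib]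
  refine Finset.sum_congr rfl fun G _ => ?_
  by_cases h : Q G <;> simp [h]

lemma Pr_or_le {n : ℕ} {p : ℝ} (h0 : 0 ≤ p) (h1 : p ≤ 1) (Q R : SimpleGraph (Fin n) → Prop) :
    Pr n p (fun G => Q G ∨ R G) ≤ Pr n p Q + Pr n p R := by
  classical
  rw [Pr, Pr, Pr, ← Finset.sum_add_distrib]
  refine Finset.sum_le_sum fun G _ => ?_
  have := weight_nonneg h0 h1 G
  by_cases h : Q G <;> by_cases h' : R G <;> simp [h, h', this]

lemma Pr_exists_le {n : ℕ} {p : ℝ} (h0 : 0 ≤ p) (h1 : p ≤ 1) {ι : Type*} (s : Finset ι)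
    (Q : ι → SimpleGraph (Fin n) → Prop) :
    Pr n p (fun G => ∃ i ∈ s, Q i G) ≤ ∑ i ∈ s, Pr n p (Q i) := by
  classical
  simp only [Pr]
  rw [Finset.sum_comm]
  refine Finset.sum_le_sum fun G _ => ?_
  have hw := weight_nonneg h0 h1 G
  have hnn : ∀ i ∈ s, (0 : ℝ) ≤ if Q i G then weight n p G else 0 := by
    intro i _
    split_ifs <;> simp [hw]
  split_ifs with h
  · obtain ⟨i, hi, hq⟩ := h
    have := Finset.single_le_sum hnn hi
    simpa [hq] using this
  · exact Finset.sum_nonneg hnn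

/-- The Chernoff bound, for both tails: `s > 0` gives the upper tail and `s < 0` the lower one. -/
lemma Pr_tail {n : ℕ} {p : ℝ} (h0 : 0 ≤ p) (h1 : p ≤ 1) (D : Finset (Fin n × Fin n))
    (hD : EdgeList D) (s k : ℝ) :
    Pr n p (fun G => s * k ≤ s * cnt D G) ≤ exp (-(s * k) + D.card * (p * (exp s - 1))) := by
  classical
  have hA : Pr n p (fun G => s * k ≤ s * cnt D G) ≤
      ∑ G : SimpleGraph (Fin n), exp (-(s * k)) * (weight n p G * (exp s) ^ cnt D G) := by
    refine Finset.sum_le_sum fun G _ => ?_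
    have hw := weight_nonneg h0 h1 G
    have e : exp (-(s * k)) * (weight n p G * (exp s) ^ cnt D G) =
        weight n p G * exp (s * cnt D G - s * k) := by
      rw [← Real.exp_nat_mul, sub_eq_add_neg, Real.exp_add, mul_comm s (cnt D G : ℝ)]
      ring
    rw [e]
    split_ifs with h
    · have : 1 ≤ exp (s * cnt D G - s * k) := Real.one_le_exp (by linarith)
      nlinarith
    · positivity
  refine hA.trans ?_
  rw [← Finset.mul_sum, sum_weight_pow p _ D hD, Real.exp_add]
  refine mul_le_mul_of_nonneg_left ?_ (exp_pos _).le
  rw [Real.exp_nat_mul]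
  have hpos : 0 ≤ p * exp s + (1 - p) := by
    have := exp_pos s
    nlinarith
  refine pow_le_pow_left₀ hpos ?_ _
  have := Real.add_one_le_exp (p * (exp s - 1))
  linarith

lemma Pr_upper {n : ℕ} {p : ℝ} (h0 : 0 ≤ p) (h1 : p ≤ 1) (D : Finset (Fin n × Fin n))
    (hD : EdgeList D) {s k M : ℝ} (hs : 0 ≤ s) (hM : (D.card : ℝ) ≤ M) :
    Pr n p (fun G => k ≤ cnt D G) ≤ exp (-(s * k) + M * p * exp s) := by
  refine (Pr_mono h0 h1 (R := fun G => s * k ≤ s * cnt D G)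
    (fun G h => mul_le_mul_of_nonneg_left h hs)).trans ((Pr_tail h0 h1 D hD s k).trans ?_)
  refine Real.exp_le_exp.2 ?_
  have e := Real.one_le_exp hs
  have a : (D.card : ℝ) * (p * (exp s - 1)) ≤ M * (p * (exp s - 1)) :=
    mul_le_mul_of_nonneg_right hM (mul_nonneg h0 (by linarith))
  have b : 0 ≤ M * p := mul_nonneg ((Nat.cast_nonneg _).trans hM) h0
  nlinarith

/-! ### The deterministic part -/

/-- Already the Chvátal condition at `i = 1` bounds every degree: its second alternative would
make a degree negative. -/
lemma ChvatalFamily.deg_le {n : ℕ} {p ε : ℝ} {s : ℕ} {H : SimpleGraph (Fin n)} (hn : 3 ≤ n)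
    (hp : 0 < p) (hεn : 1 < ε * n) (h : ChvatalFamily n p ε s H) (w : Fin n) :
    (deg H w : ℝ) ≤ (1 - ε) * n * p := by
  obtain ⟨v, hv, hmono, hc⟩ := h
  have hn3 : (3 : ℝ) ≤ n := by exact_mod_cast hn
  have h0 := hc ⟨0, by omega⟩ (by push_cast; linarith)
  obtain ⟨i, rfl⟩ := hv.2 w
  have hi : (deg H (v i) : ℝ) ≤ deg H (v ⟨0, by omega⟩) := by
    exact_mod_cast hmono ⟨0, by omega⟩ i (Nat.zero_le _)
  rcases h0 with h0 | h0
  · push_cast at h0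
    nlinarith
  · exfalso
    have : (0 : ℝ) ≤ (((0 : ℕ) : ℝ) + 1) * p - ε * n * p := (Nat.cast_nonneg _).trans h0
    push_cast at this
    nlinarith

/-- The pairs `u < v` inside `Z`. -/
def inner {n : ℕ} (Z : Finset (Fin n)) : Finset (Fin n × Fin n) :=
  (Z ×ˢ Z).filter fun q => q.1 < q.2

/-- The pairs from `X` to `Y \ X`. -/
def outer {n : ℕ} (X Y : Finset (Fin n)) : Finset (Fin n × Fin n) := X ×ˢ (Y \ X)

lemma edgeList_inner {n : ℕ} (Z : Finset (Fin n)) : EdgeList (inner Z) := by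
  constructor
  · intro q hq
    exact (Finset.mem_filter.1 hq).2.ne
  · rintro ⟨a, b⟩ hq ⟨c, d⟩ hr h
    simp only [inner, Finset.coe_filter, Set.mem_ofPred_eq] at hq hr
    simp only [Sym2.eq_iff] at h
    rcases h with ⟨rfl, rfl⟩ | ⟨rfl, rfl⟩
    · rfl
    · exact absurd hq.2 hr.2.asymm

lemma edgeList_outer {n : ℕ} (X Y : Finset (Fin n)) : EdgeList (outer X Y) := by
  constructor
  · rintro ⟨a, b⟩ hq h
    simp only [outer, Finset.mem_product, Finset.mem_sdiff] at hq h
    exact hq.2.2 (h ▸ hq.1)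
  · rintro ⟨a, b⟩ hq ⟨c, d⟩ hr h
    simp only [outer, Finset.mem_coe, Finset.mem_product, Finset.mem_sdiff] at hq hr
    simp only [Sym2.eq_iff] at h
    rcases h with ⟨rfl, rfl⟩ | ⟨rfl, rfl⟩
    · rfl
    · exact absurd hr.1 hq.2.2

lemma card_inner_le {n : ℕ} (Z : Finset (Fin n)) : (inner Z).card ≤ Z.card * Z.card := by
  rw [← Finset.card_product]
  exact Finset.card_filter_le _ _

lemma card_outer_le {n : ℕ} (X Y : Finset (Fin n)) : (outer X Y).card ≤ X.card * Y.card := by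
  rw [outer, Finset.card_product]
  exact Nat.mul_le_mul_left _ (Finset.card_le_card Finset.sdiff_subset)

lemma deg_eq_cnt {n : ℕ} (G : SimpleGraph (Fin n)) (v : Fin n) :
    deg G v = cnt (outer {v} Finset.univ) G := by
  classical
  have : (((outer {v} Finset.univ).filter fun q => G.Adj q.1 q.2).image Prod.snd) =
      G.neighborFinset v := by
    ext w
    simp only [outer, Finset.mem_image, Finset.mem_filter, Finset.mem_product,
      Finset.mem_singleton, Finset.mem_sdiff, Finset.mem_univ, true_and,
      SimpleGraph.mem_neighborFinset, Prod.exists]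
    constructor
    · rintro ⟨a, b, ⟨⟨rfl, _⟩, h⟩, rfl⟩
      exact h
    · intro h
      exact ⟨v, w, ⟨⟨rfl, h.ne'⟩, h⟩, rfl⟩
  rw [deg, cnt, ← SimpleGraph.coe_neighborFinset, Set.ncard_coe_finset, ← this,
    Finset.card_image_of_injOn]
  rintro ⟨a, b⟩ hq ⟨c, d⟩ hr h
  simp only [outer, Finset.coe_filter, Finset.mem_product, Finset.mem_singleton,
    Set.mem_ofPred_eq] at hq hr h
  rw [hq.1.1, hr.1.1, h]

/-- If all `G'`-neighbours of `X` lie in `Y`, the `G'`-degree sum over `X` counts only edges from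
`X` to `Y \ X`, each once, and edges inside `X ∩ Y`, each twice. -/
lemma sum_deg_le {n : ℕ} {G G' : SimpleGraph (Fin n)} (hG : G' ≤ G) (X Y : Finset (Fin n))
    (hXY : ∀ u ∈ X, ∀ v, G'.Adj u v → v ∈ Y) :
    ∑ u ∈ X, deg G' u ≤ cnt (outer X Y) G + 2 * cnt (inner (X ∩ Y)) G := by
  classical
  set A := (outer X Y).filter fun q => G.Adj q.1 q.2
  set B := (inner (X ∩ Y)).filter fun q => G.Adj q.1 q.2
  have h1 : ∑ u ∈ X, deg G' u = (X.sigma fun u => G'.neighborFinset u).card := by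
    rw [Finset.card_sigma]
    refine Finset.sum_congr rfl fun u _ => ?_
    rw [deg, Set.ncard_eq_toFinset_card', SimpleGraph.neighborFinset]
  have h2 : (X.sigma fun u => G'.neighborFinset u).card ≤ (A ∪ (B ∪ B.image Prod.swap)).card := by
    refine Finset.card_le_card_of_injOn (fun q => (q.1, q.2)) ?_ ?_
    · rintro ⟨u, v⟩ h
      simp only [Finset.coe_sigma, Set.mem_sigma_iff, Finset.mem_coe,
        SimpleGraph.mem_neighborFinset] at h
      obtain ⟨hu, hv⟩ := h
      have hvY := hXY u hu v hv
      have hadj := hG hv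
      simp only [Finset.mem_coe, Finset.mem_union, A, B, outer, inner, Finset.mem_filter,
        Finset.mem_product, Finset.mem_sdiff, Finset.mem_inter, Finset.mem_image, Prod.exists,
        Prod.swap_prod_mk, Prod.mk.injEq]
      by_cases hvX : v ∈ X
      · right
        -- an edge inside `X` has both ends in `Y`
        have huY := hXY v hvX u hv.symm
        rcases lt_or_gt_of_ne hadj.ne with hlt | hlt
        · exact Or.inl ⟨⟨⟨⟨hu, huY⟩, hvX, hvY⟩, hlt⟩, hadj⟩
        · exact Or.inr ⟨v, u, ⟨⟨⟨⟨hvX, hvY⟩, hu, huY⟩, hlt⟩, hadj.symm⟩, rfl, rfl⟩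
      · exact Or.inl ⟨⟨hu, hvY, hvX⟩, hadj⟩
    · rintro ⟨a, b⟩ _ ⟨c, d⟩ _ h
      simp only [Prod.mk.injEq] at h
      obtain ⟨rfl, rfl⟩ := h
      rfl
  have h3 : (A ∪ (B ∪ B.image Prod.swap)).card ≤ A.card + (B.card + B.card) :=
    (Finset.card_union_le _ _).trans (Nat.add_le_add_left ((Finset.card_union_le _ _).trans
      (Nat.add_le_add_left Finset.card_image_le _)) _)
  have hA : A.card = cnt (outer X Y) G := rfl
  have hB : B.card = cnt (inner (X ∩ Y)) G := rfl
  omega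

/-- The size below which a set `Y` is too small to contain the neighbourhood of `x` vertices;
`L` stands for `(log n) ^ (-1/4)`. -/
noncomputable def thr (n : ℕ) (p ε L : ℝ) (x : ℕ) : ℝ := ε * n / 2 * min (x * p) L

/-- The quasirandom properties of `G` force expansion of `G \ H`. -/
lemma expansion_of_typical {n : ℕ} {p ε L : ℝ} (hε : 0 < ε) (hε1 : ε < 1) (hn : 3 ≤ n)
    (hp : 0 < p) (hεn : 1 < ε * n) (hL : 0 < L) {G H : SimpleGraph (Fin n)}
    (hdeg : ∀ v, (1 - ε / 8) * n * p < deg G v)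
    (hin : ∀ Z : Finset (Fin n), Z.Nonempty → (Z.card : ℝ) ≤ n * L →
      (cnt (inner Z) G : ℝ) < ε / 16 * (Z.card * n * p))
    (hout : ∀ X : Finset (Fin n), X.Nonempty → ∀ Y : Finset (Fin n),
      (Y.card : ℝ) < thr n p ε L X.card →
      (cnt (outer X Y) G : ℝ) < 3 * ε / 4 * (X.card * n * p))
    {s : ℕ} (hC : ChvatalFamily n p ε s H) (X : Set (Fin n)) :
    min (ε * X.ncard * n * p / 2) (ε * n * L / 2) ≤ ((nbhd (G \ H) X).ncard : ℝ) := by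
  classical
  have hnp : 0 < (n : ℝ) * p := by
    have : (3 : ℝ) ≤ n := by exact_mod_cast hn
    positivity
  obtain ⟨X, rfl⟩ : ∃ X' : Finset (Fin n), (X' : Set (Fin n)) = X := ⟨X.toFinset, by simp⟩
  obtain ⟨Y, hY⟩ : ∃ Y : Finset (Fin n), (Y : Set (Fin n)) = nbhd (G \ H) X :=
    ⟨(nbhd (G \ H) X).toFinset, by simp⟩
  rw [← hY, Set.ncard_coe_finset, Set.ncard_coe_finset]
  rcases X.eq_empty_or_nonempty with rfl | hX
  · refine (min_le_left _ _).trans ?_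
    simp
  by_contra! hlt
  have hthr : thr n p ε L X.card = min (ε * X.card * n * p / 2) (ε * n * L / 2) := by
    rw [thr, mul_min_of_nonneg _ _ (by positivity)]
    congr 1 <;> ring
  have hA := hout X hX Y (by rw [hthr]; exact hlt)
  have hsum := sum_deg_le (G := G) (G' := G \ H) sdiff_le X Y (by
    intro u hu v huv
    have : v ∈ (Y : Set (Fin n)) := by
      rw [hY]
      exact ⟨u, hu, huv.symm⟩
    exact this)
  have hxpos : (0 : ℝ) < X.card := by exact_mod_cast hX.card_pos
  have hB : (cnt (inner (X ∩ Y)) G : ℝ) ≤ ε / 16 * (X.card * n * p) := by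
    rcases (X ∩ Y).eq_empty_or_nonempty with h | h
    · rw [h]
      have : cnt (inner (∅ : Finset (Fin n))) G = 0 := by simp [cnt, inner]
      rw [this]
      push_cast
      positivity
    · have hZX : ((X ∩ Y).card : ℝ) ≤ X.card := by
        exact_mod_cast Finset.card_le_card Finset.inter_subset_left
      have hZY : ((X ∩ Y).card : ℝ) ≤ Y.card := by
        exact_mod_cast Finset.card_le_card Finset.inter_subset_right
      have h2 : ε * n * L / 2 ≤ n * L := by
        have : 0 ≤ (n : ℝ) * L := by positivity
        nlinarith
      refine (hin _ h (by linarith [hlt.trans_le (min_le_right _ _)])).le.trans ?_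
      gcongr
  have hdeg' : ∀ u, 7 * ε / 8 * (n * p) ≤ (deg (G \ H) u : ℝ) := by
    intro u
    have h1 := hdeg u
    have h2 := hC.deg_le hn hp hεn u
    have h3 : deg G u ≤ deg (G \ H) u + deg H u := by
      simp only [deg]
      refine le_trans (Set.ncard_le_ncard ?_ (Set.toFinite _)) (Set.ncard_union_le _ _)
      intro w hw
      by_cases hwH : H.Adj u w
      · exact Or.inr hwH
      · exact Or.inl ⟨hw, hwH⟩
    have h3' : (deg G u : ℝ) ≤ deg (G \ H) u + deg H u := by exact_mod_cast h3
    nlinarith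
  have hlow : (X.card : ℝ) * (7 * ε / 8 * (n * p)) ≤ ∑ u ∈ X, (deg (G \ H) u : ℝ) := by
    rw [← nsmul_eq_mul]
    exact Finset.card_nsmul_le_sum _ _ _ fun u _ => hdeg' u
  have hsum' : ∑ u ∈ X, (deg (G \ H) u : ℝ) ≤
      cnt (outer X Y) G + 2 * cnt (inner (X ∩ Y)) G := by exact_mod_cast hsum
  nlinarith

/-! ### Typical properties of the random graph -/

/-- The binomial theorem, as a sum over subsets. -/
lemma sum_pow_card (n : ℕ) (q : ℝ) : ∑ X : Finset (Fin n), q ^ X.card = (1 + q) ^ n := by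
  have := Finset.sum_pow_mul_eq_add_pow q 1 (Finset.univ : Finset (Fin n))
  simpa [add_comm] using this

lemma one_add_pow_le {q : ℝ} (hq : 0 ≤ q) (n : ℕ) : (1 + q) ^ n ≤ exp (n * q) := by
  rw [Real.exp_nat_mul]
  refine pow_le_pow_left₀ (by linarith) ?_ n
  linarith [Real.add_one_le_exp q]

/-- A union bound over all nonempty vertex sets: failure probabilities decaying like
`n ^ (-2 * |X|)` are summable to `O(1 / n)`. -/
lemma sum_nonempty_le {n : ℕ} (hn : 1 ≤ n) {t : ℝ} (ht : 2 * Real.log n ≤ t) :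
    ∑ X : Finset (Fin n) with X.Nonempty, exp (-(X.card * t)) ≤ 2 / n := by
  classical
  have hn1 : (1 : ℝ) ≤ n := by exact_mod_cast hn
  set q := exp (-t) with hq
  have hq0 : 0 ≤ q := (exp_pos _).le
  have hq2 : n * q ≤ 1 / n := by
    have : q ≤ exp (-(2 * Real.log n)) := Real.exp_le_exp.2 (by linarith)
    have e : exp (-(2 * Real.log n)) = 1 / (n * n) := by
      rw [Real.exp_neg, two_mul, Real.exp_add, Real.exp_log (by linarith), one_div]
    rw [e] at this
    calc n * q ≤ n * (1 / (n * n)) := by gcongr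
      _ = 1 / n := by field_simp
  have h1 : ∑ X : Finset (Fin n), exp (-(X.card * t)) = (1 + q) ^ n := by
    rw [← sum_pow_card]
    refine Finset.sum_congr rfl fun X _ => ?_
    rw [hq, ← Real.exp_nat_mul]
    ring_nf
  have h2 : ∑ X : Finset (Fin n), exp (-(X.card * t)) =
      1 + ∑ X : Finset (Fin n) with X.Nonempty, exp (-(X.card * t)) := by
    rw [← Finset.sum_filter_add_sum_filter_not Finset.univ (fun X : Finset (Fin n) => X.Nonempty),
      add_comm]
    congr 1
    have : (Finset.univ.filter fun X : Finset (Fin n) => ¬ X.Nonempty) = {∅} := by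
      ext X
      simp [Finset.not_nonempty_iff_eq_empty]
    rw [this]
    simp
  have hx : 1 / (n : ℝ) ≤ 1 := by
    rw [div_le_one (by linarith)]
    exact hn1
  have hx0 : 0 ≤ 1 / (n : ℝ) := by positivity
  have h3 := (one_add_pow_le hq0 n).trans (Real.exp_le_exp.2 hq2)
  have h4 := (abs_le.1 (Real.abs_exp_sub_one_sub_id_le (x := 1 / (n : ℝ))
    (by rw [abs_of_nonneg hx0]; exact hx))).2
  have h5 : 2 / (n : ℝ) = 2 * (1 / n) := by ring
  rw [h5]
  nlinarith

/-- A vertex of degree below `(1 - ε / 8) n p` is unlikely. -/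
lemma Pr_deg_le {n : ℕ} {p ε : ℝ} (hε : 0 < ε) (hε1 : ε < 1) (h0 : 0 ≤ p) (h1 : p ≤ 1)
    (hn : 1 ≤ n) (v : Fin n) :
    Pr n p (fun G => (deg G v : ℝ) ≤ (1 - ε / 8) * n * p) ≤ exp (1 - ε ^ 2 / 256 * (n * p)) := by
  have ht := Pr_tail h0 h1 _ (edgeList_outer {v} Finset.univ) (-(ε / 16)) ((1 - ε / 8) * n * p)
  refine (Pr_mono h0 h1 fun G h => ?_).trans (ht.trans (Real.exp_le_exp.2 ?_))
  · rw [deg_eq_cnt] at h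
    nlinarith
  · have hc : ((outer {v} (Finset.univ : Finset (Fin n))).card : ℝ) = n - 1 := by
      rw [outer, Finset.card_product, Finset.card_sdiff_of_subset (Finset.subset_univ _)]
      simp [Nat.cast_sub hn]
    have h4 := (abs_le.1 (Real.abs_exp_sub_one_sub_id_le (x := -(ε / 16))
      (by rw [abs_neg, abs_of_pos (by linarith)]; linarith))).2
    have hn1 : (0 : ℝ) ≤ n - 1 := by
      have : (1 : ℝ) ≤ n := by exact_mod_cast hn
      linarith
    rw [hc]
    have h5 : ((n : ℝ) - 1) * (p * (exp (-(ε / 16)) - 1)) ≤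
        (n - 1) * (p * (-(ε / 16) + (ε / 16) ^ 2)) := by
      gcongr
      linarith
    have h6 : p * (ε / 16 - (ε / 16) ^ 2) ≤ 1 := by nlinarith
    nlinarith

/-- Small sets are unlikely to span many edges. -/
lemma Pr_inner_le {n : ℕ} {p ε l : ℝ} (h0 : 0 ≤ p) (h1 : p ≤ 1) (hl : 0 ≤ l)
    (hεl : 32 ≤ ε * l) (Z : Finset (Fin n)) (hZ : (Z.card : ℝ) ≤ n * exp (-l)) :
    Pr n p (fun G => ε / 16 * (Z.card * n * p) ≤ cnt (inner Z) G) ≤ exp (-(Z.card * (n * p))) := by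
  have hM : ((inner Z).card : ℝ) ≤ Z.card * Z.card := by exact_mod_cast card_inner_le Z
  refine (Pr_upper h0 h1 _ (edgeList_inner Z) hl hM).trans (Real.exp_le_exp.2 ?_)
  have hZ' : (Z.card : ℝ) * exp l ≤ n := by
    calc (Z.card : ℝ) * exp l ≤ n * exp (-l) * exp l := by gcongr
      _ = n := by rw [mul_assoc, ← Real.exp_add]; simp
  have e1 : (Z.card : ℝ) * Z.card * p * exp l ≤ Z.card * p * n := by
    calc (Z.card : ℝ) * Z.card * p * exp l = Z.card * p * (Z.card * exp l) := by ring
      _ ≤ Z.card * p * n := by gcongr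
  have e2 : 0 ≤ (Z.card : ℝ) * n * p := by positivity
  nlinarith

/-- It is unlikely that some small set `Y` receives many edges from a given set `X`. The Chernoff
parameter `s` is chosen with `exp (-s) = min (|X| p) L`, which balances the number of sets `Y`
against the tail bound. -/
lemma Pr_outer_le {n : ℕ} {p ε l : ℝ} (hε : 0 < ε) (hε1 : ε < 1) (h0 : 0 < p) (h1 : p ≤ 1)
    (hl : 0 ≤ l) (hεl : 32 ≤ ε * l) (X : Finset (Fin n)) (hX : X.Nonempty) :
    ∑ Y : Finset (Fin n) with (Y.card : ℝ) < thr n p ε (exp (-l)) X.card,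
      Pr n p (fun G => 3 * ε / 4 * (X.card * n * p) ≤ cnt (outer X Y) G) ≤
        exp (-(X.card * (n * p))) := by
  classical
  have hx : (0 : ℝ) < X.card := by exact_mod_cast hX.card_pos
  set μ := min (X.card * p) (exp (-l)) with hμ
  have hμ0 : 0 < μ := lt_min (by positivity) (exp_pos _)
  set s := -Real.log μ with hs
  have hes : exp (-s) = μ := by rw [hs, neg_neg, Real.exp_log hμ0]
  have hes' : μ * exp s = 1 := by rw [← hes, ← Real.exp_add]; simp
  have hls : l ≤ s := by
    have : exp (-s) ≤ exp (-l) := by rw [hes]; exact min_le_right _ _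
    linarith [Real.exp_le_exp.1 this]
  have hs0 : 0 ≤ s := hl.trans hls
  set m := thr n p ε (exp (-l)) X.card with hm
  have hmμ : m = ε * n / 2 * μ := rfl
  have hμx : μ ≤ X.card * p := min_le_left _ _
  set T : ℝ := X.card * n * p with hT
  have hT0 : 0 ≤ T := by positivity
  have hmT : m ≤ ε / 2 * T := by
    rw [hmμ]
    calc ε * n / 2 * μ ≤ ε * n / 2 * (X.card * p) := by gcongr
      _ = ε / 2 * T := by rw [hT]; ring
  have hnμ : n * μ ≤ T := by
    calc n * μ ≤ n * (X.card * p) := by gcongr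
      _ = T := by rw [hT]; ring
  have hterm : ∀ Y ∈ Finset.univ.filter (fun Y : Finset (Fin n) => (Y.card : ℝ) < m),
      Pr n p (fun G => 3 * ε / 4 * T ≤ cnt (outer X Y) G) ≤
        exp (s * m - s * (3 * ε / 4 * T) + ε / 2 * T) * μ ^ Y.card := by
    intro Y hY
    rw [Finset.mem_filter] at hY
    have hM : ((outer X Y).card : ℝ) ≤ X.card * m := by
      calc ((outer X Y).card : ℝ) ≤ X.card * Y.card := by exact_mod_cast card_outer_le X Y
        _ ≤ X.card * m := by gcongr; exact hY.2.le
    refine (Pr_upper h0.le h1 _ (edgeList_outer X Y) hs0 hM).trans ?_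
    rw [← hes, ← Real.exp_nat_mul, ← Real.exp_add]
    refine Real.exp_le_exp.2 ?_
    have e1 : X.card * m * p * exp s = ε / 2 * T := by
      rw [hmμ, hT]
      linear_combination (X.card * (ε * n / 2) * p) * hes'
    rw [e1]
    have := mul_nonneg hs0 (sub_nonneg.2 hY.2.le)
    nlinarith
  refine (Finset.sum_le_sum hterm).trans ?_
  rw [← Finset.mul_sum]
  have hsum : ∑ Y : Finset (Fin n) with (Y.card : ℝ) < m, μ ^ Y.card ≤ exp (n * μ) := by
    refine le_trans ?_ (one_add_pow_le hμ0.le n)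
    rw [← sum_pow_card]
    exact Finset.sum_le_sum_of_subset_of_nonneg (Finset.subset_univ _)
      fun _ _ _ => pow_nonneg hμ0.le _
  refine (mul_le_mul_of_nonneg_left hsum (exp_pos _).le).trans ?_
  rw [← Real.exp_add]
  refine Real.exp_le_exp.2 ?_
  have e2 : s * m ≤ s * (ε / 2 * T) := mul_le_mul_of_nonneg_left hmT hs0
  have e3 : 32 ≤ ε * s := hεl.trans (mul_le_mul_of_nonneg_left hls hε.le)
  have e4 : 32 * T ≤ ε * s * T := mul_le_mul_of_nonneg_right e3 hT0
  have e5 : ε / 2 * T ≤ T := by nlinarith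
  have e6 : (X.card : ℝ) * (n * p) = T := by rw [hT]; ring
  rw [e6]
  linarith

/-- The quantitative form of the theorem, with `L = exp (-l)` in place of `(log n) ^ (-1/4)`. -/
lemma Pr_expansion_ge {n : ℕ} {p ε l : ℝ} (hε : 0 < ε) (hε1 : ε < 1) (h1 : p ≤ 1) (hn : 3 ≤ n)
    (hεn : 1 < ε * n) (hl : 0 ≤ l) (hεl : 32 ≤ ε * l)
    (hnp : 512 / ε ^ 2 * Real.log n ≤ n * p) (s : ℕ) :
    1 - 7 / n ≤ Pr n p (fun G =>
      ∀ H : SimpleGraph (Fin n), H ≤ G → ChvatalFamily n p ε s H →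
        ∀ X : Set (Fin n),
          min (ε * X.ncard * n * p / 2) (ε * n * exp (-l) / 2)
            ≤ ((nbhd (G \ H) X).ncard : ℝ)) := by
  classical
  have hn3 : (3 : ℝ) ≤ n := by exact_mod_cast hn
  have hlog : 0 < Real.log n := Real.log_pos (by linarith)
  have hp : 0 < p := by
    have : 0 < (n : ℝ) * p := lt_of_lt_of_le (by positivity) hnp
    exact pos_of_mul_pos_right this (by linarith)
  have hlog1 : 2 * Real.log n ≤ ε ^ 2 / 256 * (n * p) := by
    calc 2 * Real.log n = ε ^ 2 / 256 * (512 / ε ^ 2 * Real.log n) := by field_simp; norm_num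
      _ ≤ _ := by gcongr
  have hlog2 : 2 * Real.log n ≤ n * p := by
    refine hlog1.trans ?_
    have h2 : ε ^ 2 / 256 ≤ 1 := by nlinarith
    exact mul_le_of_le_one_left (by positivity) h2
  have hdeg : Pr n p (fun G => ∃ v ∈ (Finset.univ : Finset (Fin n)),
      (deg G v : ℝ) ≤ (1 - ε / 8) * n * p) ≤ 3 / n := by
    refine (Pr_exists_le hp.le h1 _ _).trans ?_
    refine (Finset.sum_le_sum fun v _ => Pr_deg_le hε hε1 hp.le h1 (by omega) v).trans ?_
    rw [Finset.sum_const, nsmul_eq_mul, Finset.card_univ, Fintype.card_fin]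
    have e1 : exp (1 - ε ^ 2 / 256 * (n * p)) ≤ exp (1 - 2 * Real.log n) :=
      Real.exp_le_exp.2 (by linarith)
    have e2 : exp (1 - 2 * Real.log n) = exp 1 / (n * n) := by
      rw [Real.exp_sub, two_mul, Real.exp_add, Real.exp_log (by linarith)]
    calc (n : ℝ) * exp (1 - ε ^ 2 / 256 * (n * p)) ≤ n * (exp 1 / (n * n)) := by
          rw [← e2]; gcongr
      _ = exp 1 / n := by field_simp
      _ ≤ 3 / n := by gcongr; linarith [Real.exp_one_lt_d9]
  have hin : Pr n p (fun G => ∃ Z ∈ Finset.univ.filter (fun Z : Finset (Fin n) =>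
      Z.Nonempty ∧ (Z.card : ℝ) ≤ n * exp (-l)),
      ε / 16 * (Z.card * n * p) ≤ cnt (inner Z) G) ≤ 2 / n := by
    refine (Pr_exists_le hp.le h1 _ _).trans ?_
    refine (Finset.sum_le_sum fun Z hZ =>
      Pr_inner_le hp.le h1 hl hεl Z (Finset.mem_filter.1 hZ).2.2).trans ?_
    refine le_trans ?_ (sum_nonempty_le (by omega) hlog2)
    refine Finset.sum_le_sum_of_subset_of_nonneg ?_ fun _ _ _ => (exp_pos _).le
    intro Z hZ
    simp only [Finset.mem_filter, Finset.mem_univ, true_and] at hZ ⊢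
    exact hZ.1
  have hout : Pr n p (fun G => ∃ X ∈ Finset.univ.filter (fun X : Finset (Fin n) => X.Nonempty),
      ∃ Y ∈ Finset.univ.filter (fun Y : Finset (Fin n) =>
        (Y.card : ℝ) < thr n p ε (exp (-l)) X.card),
      3 * ε / 4 * (X.card * n * p) ≤ cnt (outer X Y) G) ≤ 2 / n := by
    refine (Pr_exists_le hp.le h1 _ _).trans ?_
    refine le_trans (Finset.sum_le_sum fun X hX => ?_) (sum_nonempty_le (by omega) hlog2)
    exact (Pr_exists_le hp.le h1 _ _).trans
      (Pr_outer_le hε hε1 hp h1 hl hεl X (Finset.mem_filter.1 hX).2)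
  rw [Pr_not]
  have key := Pr_mono hp.le h1 (n := n) (p := p)
    (Q := fun G => ¬ ∀ H : SimpleGraph (Fin n), H ≤ G → ChvatalFamily n p ε s H →
        ∀ X : Set (Fin n),
          min (ε * X.ncard * n * p / 2) (ε * n * exp (-l) / 2)
            ≤ ((nbhd (G \ H) X).ncard : ℝ))
    (R := fun G => (∃ v ∈ (Finset.univ : Finset (Fin n)),
        (deg G v : ℝ) ≤ (1 - ε / 8) * n * p) ∨
      ((∃ Z ∈ Finset.univ.filter (fun Z : Finset (Fin n) =>
        Z.Nonempty ∧ (Z.card : ℝ) ≤ n * exp (-l)),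
        ε / 16 * (Z.card * n * p) ≤ cnt (inner Z) G) ∨
      (∃ X ∈ Finset.univ.filter (fun X : Finset (Fin n) => X.Nonempty),
      ∃ Y ∈ Finset.univ.filter (fun Y : Finset (Fin n) =>
        (Y.card : ℝ) < thr n p ε (exp (-l)) X.card),
      3 * ε / 4 * (X.card * n * p) ≤ cnt (outer X Y) G)))
    (by
      intro G hG
      by_contra hR
      push Not at hR
      obtain ⟨hA, hB, hC⟩ := hR
      refine hG fun H _ hH X => expansion_of_typical hε hε1 hn hp hεn (exp_pos _)
        (fun v => hA v (Finset.mem_univ _)) (fun Z hZ hZ' => hB Z ?_)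
        (fun X hX Y hY => hC X ?_ Y ?_) hH X
      · exact Finset.mem_filter.2 ⟨Finset.mem_univ _, hZ, hZ'⟩
      · exact Finset.mem_filter.2 ⟨Finset.mem_univ _, hX⟩
      · exact Finset.mem_filter.2 ⟨Finset.mem_univ _, hY⟩)
  have u1 := Pr_or_le hp.le h1 (n := n) (p := p) (fun G => ∃ v ∈ (Finset.univ : Finset (Fin n)),
        (deg G v : ℝ) ≤ (1 - ε / 8) * n * p) _ |>.trans' key
  have u2 := u1.trans (add_le_add hdeg ((Pr_or_le hp.le h1 _ _).trans (add_le_add hin hout)))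
  have e : (7 : ℝ) / n = 3 / n + (2 / n + 2 / n) := by ring
  linarith

/-- Proposition 2.5(i).  For every `0 < ε < 1` there exists `C > 0`
such that, for `p ≥ C log n / n`, a.a.s. for every `H ∈ H^{ε,ε}_{n,p}(G)` and every
`X ⊆ V` we have `|N_{G∖H}(X)| ≥ min{ε|X|np/2, εn(log n)^{-1/4}/2}`. -/
theorem neighbourhood_expansion (ε : ℝ) (hε : 0 < ε) (hε1 : ε < 1) :
    ∃ C : ℝ, 0 < C ∧ ∀ η : ℝ, 0 < η → ∃ N : ℕ, ∀ n : ℕ, N ≤ n →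
      ∀ p : ℝ, C * Real.log n / n ≤ p → p ≤ 1 →
        1 - η ≤ Pr n p (fun G =>
          ∀ H : SimpleGraph (Fin n), H ≤ G → ChvatalFamily n p ε ⌈ε * n⌉₊ H →
            ∀ X : Set (Fin n),
              min (ε * X.ncard * n * p / 2) (ε * n * Real.log n ^ (-(1/4) : ℝ) / 2)
                ≤ ((nbhd (G \ H) X).ncard : ℝ)) := by
  refine ⟨512 / ε ^ 2, by positivity, fun η hη => ?_⟩
  have hcast : Tendsto (fun n : ℕ => (n : ℝ)) atTop atTop := tendsto_natCast_atTop_atTop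
  have hlog : Tendsto (fun n : ℕ => Real.log n) atTop atTop := Real.tendsto_log_atTop.comp hcast
  have hloglog : Tendsto (fun n : ℕ => Real.log (Real.log n)) atTop atTop :=
    Real.tendsto_log_atTop.comp hlog
  have hev : ∀ᶠ n : ℕ in atTop, 3 ≤ n ∧ 1 / ε < n ∧ 7 / η ≤ n ∧ 0 < Real.log n ∧
      128 / ε ≤ Real.log (Real.log n) :=
    (eventually_ge_atTop 3).and ((hcast.eventually_gt_atTop _).and
      ((hcast.eventually_ge_atTop _).and ((hlog.eventually_gt_atTop _).and
        (hloglog.eventually_ge_atTop _))))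
  obtain ⟨N, hN⟩ := eventually_atTop.1 hev
  refine ⟨N, fun n hn p hp hp1 => ?_⟩
  obtain ⟨hn3, hnε, hnη, hlogn, hll⟩ := hN n hn
  have hn0 : (0 : ℝ) < n := by
    have : (3 : ℝ) ≤ n := by exact_mod_cast hn3
    linarith
  have hL : Real.log n ^ (-(1/4) : ℝ) = exp (-(Real.log (Real.log n) / 4)) := by
    rw [Real.rpow_def_of_pos hlogn]
    congr 1
    ring
  have hll' : 128 ≤ ε * Real.log (Real.log n) := by
    rw [div_le_iff₀ hε] at hll
    linarith
  have hmain := Pr_expansion_ge (n := n) (p := p) (l := Real.log (Real.log n) / 4) hε hε1 hp1 hn3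
    (by rw [div_lt_iff₀ hε] at hnε; linarith)
    (div_nonneg (le_trans (by positivity) hll) (by norm_num)) (by linarith)
    (by rw [div_le_iff₀ hn0] at hp; linarith) ⌈ε * n⌉₊
  have hη7 : 7 / (n : ℝ) ≤ η := by
    rw [div_le_iff₀ hη] at hnη
    rw [div_le_iff₀ hn0]
    linarith
  rw [hL]
  linarith

end Resilience
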